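/- Under Assumptions 1, 2 and 3, the sequence Q_n is asymptotically efficient (R_Q(B) exists and equals 2 I_P(B)) if and only if inf_{(m,w)∈B×ℝ} {2w + J_Q(m,w)} = 2 inf_{(m,w)∈B×ℝ} {w + J_Q(m,w)}. -/

import Mathlib

open MeasureTheory Filter Set Topology
open scoped ENNReal NNReal

/-- A sequence of measures satisfies the large deviation principle with rate function `I`:
upper bound over closed sets and lower bound over open sets, at exponential speed `n`. -/
def SatisfiesLDP {X : Type*} [TopologicalSpace X] [MeasurableSpace X]
    (mu : ℕ → Measure X) (I : X → ℝ≥0∞) : Prop :=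
  (∀ F : Set X, IsClosed F →
      limsup (fun n : ℕ => (((n : ℝ)⁻¹ : ℝ) : EReal) * ENNReal.log (mu n F)) atTop
        ≤ -(⨅ x ∈ F, (I x : EReal))) ∧
  (∀ G : Set X, IsOpen G →
      -(⨅ x ∈ G, (I x : EReal)) ≤
        liminf (fun n : ℕ => (((n : ℝ)⁻¹ : ℝ) : EReal) * ENNReal.log (mu n G)) atTop)

/-- A good rate function: lower semicontinuous with compact sublevel sets. -/
def IsGoodRate {X : Type*} [TopologicalSpace X] (I : X → ℝ≥0∞) : Prop :=
  LowerSemicontinuous I ∧ ∀ c : ℝ≥0∞, c ≠ ⊤ → IsCompact {x | I x ≤ c}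

/-- The subdifferential of an extended-real-valued function on ℝ at a point. -/
def Subdiff (f : ℝ → EReal) (x : ℝ) : Set ℝ :=
  {k | ∀ y : ℝ, f x + ((k * (y - x) : ℝ) : EReal) ≤ f y}

/-- `(1/n) log x` as an extended real number. -/
noncomputable def expRate (n : ℕ) (x : ℝ≥0∞) : EReal :=
  (((n : ℝ)⁻¹ : ℝ) : EReal) * ENNReal.log x

/-- The action `W_n = -(1/n) log (dP/dQ)`. -/
noncomputable def action {Λ : Type*} [MeasurableSpace Λ]
    (P Q : Measure Λ) (n : ℕ) (x : Λ) : ℝ :=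
  -(n : ℝ)⁻¹ * Real.log ((P.rnDeriv Q) x).toReal

/-!
Since `L_n = exp(-n W_n)`, the moment `E_{Q_n}[L_n ^ θ 1_{M_n ∈ A}]` is a Laplace-type integral of
the energy `θ w` against the law of `(M_n, W_n)` under `Q_n`, and Varadhan's lemma gives it the
decay rate `inf_{A × ℝ} (θ w + J_Q)`, the moment condition controlling very negative `w`. For
`θ = 2` and `A = B` this is `R_Q(B)`. For `θ = 1` the moment is `P_n(M_n ∈ A)`; comparing with the
LDP for `M_n` on small closed neighbourhoods of a point identifies `I_P(B)` with
`inf_{B × ℝ} (w + J_Q)`. Efficiency is the equality of the first rate with twice the second.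
-/

open ExpGrowth

lemma expRate_eq_log_div (n : ℕ) (x : ℝ≥0∞) : expRate n x = ENNReal.log x / n := by
  rw [expRate, EReal.div_eq_inv_mul, EReal.coe_inv, EReal.coe_natCast]

lemma limsup_expRate (u : ℕ → ℝ≥0∞) :
    limsup (fun n => expRate n (u n)) atTop = expGrowthSup u := by
  simp only [expRate_eq_log_div, expGrowthSup]

lemma liminf_expRate (u : ℕ → ℝ≥0∞) :
    liminf (fun n => expRate n (u n)) atTop = expGrowthInf u := by
  simp only [expRate_eq_log_div, expGrowthInf]

lemma ofReal_exp_neg_nat_mul (n : ℕ) (c : ℝ) :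
    ENNReal.ofReal (Real.exp (-(n * c))) = EReal.exp ((-c : ℝ) * n) := by
  rw [← EReal.exp_coe]
  congr 1
  norm_cast
  ring

lemma coe_ennreal_biInf {X : Type*} (s : Set X) (f : X → ℝ≥0∞) :
    ((⨅ x ∈ s, f x : ℝ≥0∞) : EReal) = ⨅ x ∈ s, (f x : EReal) := by
  rw [iInf_subtype', iInf_subtype']
  exact Monotone.map_iInf_of_continuousAt continuous_coe_ennreal_ereal.continuousAt
    EReal.coe_ennreal_strictMono.monotone rfl

/-- The Laplace-type integral `∫_A exp(-n ψ) dμ_n` of an energy `ψ` over `A`; its exponential growth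
rate in `n` is the subject of Varadhan's lemma. -/
noncomputable def laplaceIntegral {Y : Type*} [MeasurableSpace Y] (μ : ℕ → Measure Y)
    (ψ : Y → ℝ) (A : Set Y) (n : ℕ) : ℝ≥0∞ :=
  ∫⁻ y in A, ENNReal.ofReal (Real.exp (-(n * ψ y))) ∂(μ n)

section LaplaceIntegral

variable {Y : Type*} [MeasurableSpace Y] {μ : ℕ → Measure Y} {φ ψ : Y → ℝ} {A B : Set Y} {c : ℝ}

lemma laplaceIntegral_zero : laplaceIntegral μ 0 A = fun n => μ n A := by
  ext n
  simp [laplaceIntegral]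

lemma laplaceIntegral_empty : laplaceIntegral μ ψ ∅ = 0 := by
  ext n
  simp [laplaceIntegral]

lemma laplaceIntegral_mono_set (h : A ⊆ B) : laplaceIntegral μ ψ A ≤ laplaceIntegral μ ψ B :=
  fun _ => lintegral_mono_set h

lemma laplaceIntegral_union_le :
    laplaceIntegral μ ψ (A ∪ B) ≤ laplaceIntegral μ ψ A + laplaceIntegral μ ψ B :=
  fun _ => lintegral_union_le _ _ _

lemma laplaceIntegral_le_exp_mul (hA : MeasurableSet A) (h : ∀ y ∈ A, c + φ y ≤ ψ y) :
    laplaceIntegral μ ψ A ≤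
      (fun n : ℕ => EReal.exp ((-c : ℝ) * n)) * laplaceIntegral μ φ A := by
  intro n
  simp only [Pi.mul_apply, laplaceIntegral, ← ofReal_exp_neg_nat_mul]
  rw [← lintegral_const_mul' _ _ ENNReal.ofReal_ne_top]
  refine setLIntegral_mono' hA fun y hy => ?_
  rw [← ENNReal.ofReal_mul (Real.exp_pos _).le, ← Real.exp_add, ← neg_add, ← mul_add]
  gcongr
  exact h y hy

lemma expGrowthSup_laplaceIntegral_le_add (hA : MeasurableSet A) (h : ∀ y ∈ A, c + φ y ≤ ψ y) :
    expGrowthSup (laplaceIntegral μ ψ A) ≤ (-c : ℝ) + expGrowthSup (laplaceIntegral μ φ A) := by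
  refine (expGrowthSup_monotone (laplaceIntegral_le_exp_mul hA h)).trans
    ((expGrowthSup_mul_le ?_ ?_).trans_eq ?_) <;> rw [expGrowthSup_exp]
  · exact .inl (EReal.coe_ne_bot _)
  · exact .inl (EReal.coe_ne_top _)

lemma expGrowthInf_laplaceIntegral_le_add (hA : MeasurableSet A) (h : ∀ y ∈ A, c + φ y ≤ ψ y) :
    expGrowthInf (laplaceIntegral μ ψ A) ≤ (-c : ℝ) + expGrowthInf (laplaceIntegral μ φ A) := by
  refine (expGrowthInf_monotone (laplaceIntegral_le_exp_mul hA h)).trans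
    ((expGrowthInf_mul_le ?_ ?_).trans_eq ?_) <;> rw [expGrowthSup_exp]
  · exact .inl (EReal.coe_ne_bot _)
  · exact .inl (EReal.coe_ne_top _)

lemma exists_mem_nhds_bot_expGrowthSup_laplaceIntegral_le [TopologicalSpace Y]
    [OpensMeasurableSpace Y] (hψ : Continuous ψ) (hA : IsClosed A) {γ : ℝ} (hγ : 1 < γ)
    (hmom : expGrowthSup (laplaceIntegral μ (fun y => γ * ψ y) A) < ⊤) (a : ℝ) :
    ∃ s ∈ 𝓝 (⊥ : EReal),
      expGrowthSup (laplaceIntegral μ ψ (A ∩ (fun y => (ψ y : EReal)) ⁻¹' s)) ≤ a := by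
  obtain ⟨C, hC, -⟩ := EReal.lt_iff_exists_real_btwn.1 hmom
  have hγ' : 0 < γ - 1 := sub_pos.2 hγ
  set T : ℝ := (a - C) / (γ - 1) with hT
  refine ⟨Iic (T : EReal), Iic_mem_nhds (EReal.bot_lt_coe T), ?_⟩
  set A' := A ∩ (fun y => (ψ y : EReal)) ⁻¹' Iic (T : EReal)
  have hA' : IsClosed A' :=
    hA.inter (isClosed_Iic.preimage (continuous_coe_real_ereal.comp hψ))
  have henergy : ∀ y ∈ A', -(a - C) + γ * ψ y ≤ ψ y := by
    rintro y ⟨-, hy⟩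
    have hψT : ψ y ≤ T := EReal.coe_le_coe_iff.1 hy
    rw [hT, le_div_iff₀ hγ'] at hψT
    linarith
  calc expGrowthSup (laplaceIntegral μ ψ A')
      ≤ (-(-(a - C)) : ℝ) + expGrowthSup (laplaceIntegral μ (fun y => γ * ψ y) A') :=
        expGrowthSup_laplaceIntegral_le_add hA'.measurableSet henergy
    _ ≤ (a - C : ℝ) + (C : EReal) := by
        rw [neg_neg]
        gcongr
        exact (expGrowthSup_monotone (laplaceIntegral_mono_set inter_subset_left)).trans hC.le
    _ = a := by norm_cast; ring

end LaplaceIntegral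

section Varadhan

variable {Y : Type*} [TopologicalSpace Y] [MeasurableSpace Y] {μ : ℕ → Measure Y}
  {J : Y → ℝ≥0∞} {ψ : Y → ℝ} {A : Set Y}

namespace SatisfiesLDP

lemma expGrowthSup_measure_le (h : SatisfiesLDP μ J) (hA : IsClosed A) :
    expGrowthSup (fun n => μ n A) ≤ -⨅ y ∈ A, (J y : EReal) :=
  (limsup_expRate _).symm.trans_le (h.1 A hA)

lemma neg_rate_le_expGrowthInf_measure (h : SatisfiesLDP μ J) (hA : IsOpen A) {y : Y} (hy : y ∈ A) :
    -(J y : EReal) ≤ expGrowthInf (fun n => μ n A) :=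
  (EReal.neg_le_neg_iff.2 (iInf₂_le y hy)).trans ((h.2 A hA).trans_eq (liminf_expRate _))

variable [OpensMeasurableSpace Y]

lemma expGrowthSup_laplaceIntegral_le_of_forall_le (h : SatisfiesLDP μ J) (hA : IsClosed A)
    {c d : ℝ} (hψ : ∀ y ∈ A, c ≤ ψ y) (hJ : ∀ y ∈ A, (d : EReal) ≤ J y) :
    expGrowthSup (laplaceIntegral μ ψ A) ≤ (-(c + d) : ℝ) := by
  have hmeasure : expGrowthSup (fun n => μ n A) ≤ (-d : ℝ) :=
    (h.expGrowthSup_measure_le hA).trans (EReal.neg_le_neg_iff.2 (le_iInf₂ hJ))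
  calc expGrowthSup (laplaceIntegral μ ψ A)
      ≤ (-c : ℝ) + expGrowthSup (laplaceIntegral μ 0 A) :=
        expGrowthSup_laplaceIntegral_le_add hA.measurableSet (by simpa using hψ)
    _ ≤ (-c : ℝ) + (-d : ℝ) := by rw [laplaceIntegral_zero]; gcongr
    _ = (-(c + d) : ℝ) := by norm_cast; ring

lemma exists_mem_nhds_top_expGrowthSup_laplaceIntegral_le (h : SatisfiesLDP μ J)
    (hψ : Continuous ψ) (hA : IsClosed A) (a : ℝ) :
    ∃ s ∈ 𝓝 (⊤ : EReal),
      expGrowthSup (laplaceIntegral μ ψ (A ∩ (fun y => (ψ y : EReal)) ⁻¹' s)) ≤ a := by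
  refine ⟨Ici ((-a : ℝ) : EReal), Ici_mem_nhds (EReal.coe_lt_top _), ?_⟩
  have hclosed := hA.inter
    ((isClosed_Ici (a := ((-a : ℝ) : EReal))).preimage (continuous_coe_real_ereal.comp hψ))
  refine (h.expGrowthSup_laplaceIntegral_le_of_forall_le hclosed (c := -a) (d := 0)
    (fun y hy => EReal.coe_le_coe_iff.1 hy.2) fun y _ => EReal.coe_ennreal_nonneg _).trans_eq ?_
  simp

lemma exists_mem_nhds_coe_expGrowthSup_laplaceIntegral_le (h : SatisfiesLDP μ J)
    (hψ : Continuous ψ) (hA : IsClosed A) {a : ℝ}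
    (ha : -(⨅ y ∈ A, ((ψ y : EReal) + J y)) < a) (t : ℝ) :
    ∃ s ∈ 𝓝 (t : EReal),
      expGrowthSup (laplaceIntegral μ ψ (A ∩ (fun y => (ψ y : EReal)) ⁻¹' s)) ≤ a := by
  obtain ⟨b, hb, hba⟩ := EReal.lt_iff_exists_real_btwn.1 ha
  set ε := (a - b) / 2 with hε
  have hε0 : 0 < ε := half_pos (sub_pos.2 (EReal.coe_lt_coe_iff.1 hba))
  refine ⟨Icc ((t - ε : ℝ) : EReal) ((t + ε : ℝ) : EReal),
    Icc_mem_nhds (by norm_cast; linarith) (by norm_cast; linarith), ?_⟩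
  set A' := A ∩ (fun y => (ψ y : EReal)) ⁻¹' Icc ((t - ε : ℝ) : EReal) ((t + ε : ℝ) : EReal)
  have hA' : IsClosed A' := hA.inter (isClosed_Icc.preimage (continuous_coe_real_ereal.comp hψ))
  have hJ : ∀ y ∈ A', ((-b - (t + ε) : ℝ) : EReal) ≤ J y := by
    rintro y ⟨hyA, -, hyt⟩
    have hbJ : ((-b : ℝ) : EReal) ≤ J y + (t + ε : ℝ) :=
      calc ((-b : ℝ) : EReal) ≤ ⨅ y ∈ A, ((ψ y : EReal) + J y) := EReal.neg_le.1 hb.le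
        _ ≤ ψ y + J y := iInf₂_le y hyA
        _ ≤ J y + (t + ε : ℝ) := by rw [add_comm]; gcongr
    rw [EReal.coe_sub]
    exact EReal.sub_le_of_le_add hbJ
  refine (h.expGrowthSup_laplaceIntegral_le_of_forall_le hA' (c := t - ε)
    (fun y hy => EReal.coe_le_coe_iff.1 hy.2.1) hJ).trans_eq ?_
  rw [hε]
  congr 1
  ring

theorem expGrowthSup_laplaceIntegral_le (h : SatisfiesLDP μ J) (hψ : Continuous ψ)
    (hA : IsClosed A) {γ : ℝ} (hγ : 1 < γ)
    (hmom : expGrowthSup (laplaceIntegral μ (fun y => γ * ψ y) A) < ⊤) :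
    expGrowthSup (laplaceIntegral μ ψ A) ≤ -⨅ y ∈ A, ((ψ y : EReal) + J y) := by
  refine EReal.le_of_forall_lt_iff_le.1 fun a ha => ?_
  -- The levels of `ψ` lie in the compact space `[-∞, ∞]`, so the bound may be checked locally in
  -- the level.
  suffices hlevels : expGrowthSup
      (laplaceIntegral μ ψ (A ∩ (fun y => (ψ y : EReal)) ⁻¹' univ)) ≤ a by
    rwa [preimage_univ, inter_univ] at hlevels
  refine isCompact_univ.induction_on
    (p := fun s => expGrowthSup (laplaceIntegral μ ψ (A ∩ (fun y => (ψ y : EReal)) ⁻¹' s)) ≤ a)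
    ?_ (fun s t hst ht => ?_) (fun s t hs ht => ?_) (fun t _ => ?_)
  · rw [preimage_empty, inter_empty, laplaceIntegral_empty, expGrowthSup_zero]
    exact bot_le
  · exact (expGrowthSup_monotone (laplaceIntegral_mono_set (by gcongr))).trans ht
  · rw [preimage_union, inter_union_distrib_left]
    refine (expGrowthSup_monotone laplaceIntegral_union_le).trans ?_
    rw [expGrowthSup_add]
    exact max_le hs ht
  · rw [nhdsWithin_univ]
    induction t with
    | bot => exact exists_mem_nhds_bot_expGrowthSup_laplaceIntegral_le hψ hA hγ hmom a
    | coe t => exact h.exists_mem_nhds_coe_expGrowthSup_laplaceIntegral_le hψ hA ha t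
    | top => exact h.exists_mem_nhds_top_expGrowthSup_laplaceIntegral_le hψ hA a

theorem neg_le_expGrowthInf_laplaceIntegral (h : SatisfiesLDP μ J) (hψ : Continuous ψ)
    (hA : IsOpen A) {y : Y} (hy : y ∈ A) :
    -((ψ y : EReal) + J y) ≤ expGrowthInf (laplaceIntegral μ ψ A) := by
  have hslack : ∀ c : ℝ, ψ y < c → -(J y : EReal) ≤ c + expGrowthInf (laplaceIntegral μ ψ A) := by
    intro c hc
    have hopen : IsOpen (A ∩ ψ ⁻¹' Iio c) := hA.inter (isOpen_Iio.preimage hψ)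
    have hle : ∀ x ∈ A ∩ ψ ⁻¹' Iio c, -c + ψ x ≤ (0 : Y → ℝ) x := by
      rintro x ⟨-, hx⟩
      simpa using le_of_lt hx
    calc -(J y : EReal) ≤ expGrowthInf (laplaceIntegral μ 0 (A ∩ ψ ⁻¹' Iio c)) := by
          rw [laplaceIntegral_zero]
          exact h.neg_rate_le_expGrowthInf_measure hopen ⟨hy, hc⟩
      _ ≤ (-(-c) : ℝ) + expGrowthInf (laplaceIntegral μ ψ (A ∩ ψ ⁻¹' Iio c)) :=
          expGrowthInf_laplaceIntegral_le_add hopen.measurableSet hle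
      _ ≤ c + expGrowthInf (laplaceIntegral μ ψ A) := by
          rw [neg_neg]
          gcongr
          exact expGrowthInf_monotone (laplaceIntegral_mono_set inter_subset_left)
  have hlimit : -(J y : EReal) ≤ ψ y + expGrowthInf (laplaceIntegral μ ψ A) := by
    refine EReal.le_add_of_forall_gt (.inl (EReal.coe_ne_bot _)) (.inl (EReal.coe_ne_top _))
      fun c hc g hg => ?_
    obtain ⟨r, hr, hrc⟩ := EReal.lt_iff_exists_real_btwn.1 hc
    exact (hslack r (EReal.coe_lt_coe_iff.1 hr)).trans (add_le_add hrc.le hg.le)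
  rw [EReal.neg_add (.inl (EReal.coe_ne_bot _)) (.inl (EReal.coe_ne_top _)), sub_eq_add_neg,
    add_comm, ← sub_eq_add_neg]
  exact EReal.sub_le_of_le_add (hlimit.trans_eq (add_comm _ _))

end SatisfiesLDP

end Varadhan

section Action

variable {Λ : Type*} [MeasurableSpace Λ] {P Q : Measure Λ}

lemma measurable_action (n : ℕ) : Measurable (action P Q n) :=
  ((P.measurable_rnDeriv Q).ennreal_toReal.log).const_mul _

lemma rnDeriv_rpow_ae_eq_exp_action [SigmaFinite P] [SigmaFinite Q] (hQP : Q ≪ P)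
    {n : ℕ} (hn : n ≠ 0) (θ : ℝ) :
    ∀ᵐ x ∂Q, P.rnDeriv Q x ^ θ = ENNReal.ofReal (Real.exp (-(n * (θ * action P Q n x)))) := by
  filter_upwards [Measure.rnDeriv_pos' hQP, P.rnDeriv_lt_top Q] with x hpos hfin
  have hpos' : 0 < (P.rnDeriv Q x).toReal := ENNReal.toReal_pos hpos.ne' hfin.ne
  have hexponent : -(n * (θ * action P Q n x)) = Real.log (P.rnDeriv Q x).toReal * θ := by
    rw [action]
    field_simp
  rw [hexponent, ← Real.rpow_def_of_pos hpos', ← ENNReal.ofReal_rpow_of_pos hpos',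
    ENNReal.ofReal_toReal hfin.ne]

end Action

/-- The truncated moments `E_{Q_n}[L_n ^ θ 1_{M_n ∈ A}]` of the likelihood ratio
`L_n = dP_n / dQ_n`, as a sequence in `n`. -/
noncomputable def truncatedMoment {X : Type*} {Λ : ℕ → Type*} [∀ n, MeasurableSpace (Λ n)]
    (P Q : ∀ n, Measure (Λ n)) (M : ∀ n, Λ n → X) (θ : ℝ) (A : Set X) (n : ℕ) : ℝ≥0∞ :=
  ∫⁻ x in {x | M n x ∈ A}, (P n).rnDeriv (Q n) x ^ θ ∂(Q n)

/-- The joint law of the observable `M_n` and the action `W_n` under `Q_n`. -/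
noncomputable def actionLaw {X : Type*} [MeasurableSpace X] {Λ : ℕ → Type*}
    [∀ n, MeasurableSpace (Λ n)] (P Q : ∀ n, Measure (Λ n)) (M : ∀ n, Λ n → X) (n : ℕ) :
    Measure (X × ℝ) :=
  (Q n).map fun x => (M n x, action (P n) (Q n) n x)

section TruncatedMoment

variable {X : Type*} {Λ : ℕ → Type*} [∀ n, MeasurableSpace (Λ n)] {P Q : ∀ n, Measure (Λ n)}
  {M : ∀ n, Λ n → X} {A B : Set X} {θ θ' : ℝ}

lemma truncatedMoment_mono (h : A ⊆ B) : truncatedMoment P Q M θ A ≤ truncatedMoment P Q M θ B :=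
  fun _ => lintegral_mono_set fun _ hx => h hx

variable [MeasurableSpace X] [∀ n, SigmaFinite (P n)] [∀ n, SigmaFinite (Q n)]

lemma truncatedMoment_one (hPQ : ∀ n, P n ≪ Q n) (hM : ∀ n, Measurable (M n))
    (hA : MeasurableSet A) : truncatedMoment P Q M 1 A = fun n => (P n).map (M n) A := by
  ext n
  simp only [truncatedMoment, ENNReal.rpow_one]
  rw [Measure.setLIntegral_rnDeriv (hPQ n), Measure.map_apply (hM n) hA, preimage]

lemma truncatedMoment_eventuallyEq_laplaceIntegral (hQP : ∀ n, Q n ≪ P n)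
    (hM : ∀ n, Measurable (M n)) (hA : MeasurableSet A) :
    truncatedMoment P Q M θ A =ᶠ[atTop]
      laplaceIntegral (actionLaw P Q M) (fun p => θ * p.2) (A ×ˢ univ) := by
  filter_upwards [eventually_ne_atTop 0] with n hn
  rw [laplaceIntegral, actionLaw, setLIntegral_map (hA.prod .univ) (by fun_prop)
    ((hM n).prodMk (measurable_action n)), prod_univ, ← preimage_comp]
  exact lintegral_congr_ae (ae_restrict_of_ae (rnDeriv_rpow_ae_eq_exp_action (hQP n) hn θ))

variable [TopologicalSpace X] [OpensMeasurableSpace X] {J : X × ℝ → ℝ≥0∞}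

lemma neg_le_expGrowthInf_truncatedMoment (hQP : ∀ n, Q n ≪ P n) (hM : ∀ n, Measurable (M n))
    (hJ : SatisfiesLDP (actionLaw P Q M) J) (hA : IsOpen A) {m : X} (hm : m ∈ A) (w : ℝ) :
    -(((θ * w : ℝ) : EReal) + J (m, w)) ≤ expGrowthInf (truncatedMoment P Q M θ A) := by
  rw [expGrowthInf_congr (truncatedMoment_eventuallyEq_laplaceIntegral hQP hM hA.measurableSet)]
  exact hJ.neg_le_expGrowthInf_laplaceIntegral (y := (m, w)) (continuous_snd.const_mul θ)
    (hA.prod isOpen_univ) ⟨hm, mem_univ w⟩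

lemma expGrowthSup_truncatedMoment_le (hQP : ∀ n, Q n ≪ P n) (hM : ∀ n, Measurable (M n))
    (hJ : SatisfiesLDP (actionLaw P Q M) J) (hθ : 0 < θ) (hθθ' : θ < θ') (hA : IsClosed A)
    (hmom : expGrowthSup (truncatedMoment P Q M θ' A) < ⊤) :
    expGrowthSup (truncatedMoment P Q M θ A) ≤
      -⨅ m ∈ A, ⨅ w : ℝ, (((θ * w : ℝ) : EReal) + J (m, w)) := by
  have hbridge (η : ℝ) := expGrowthSup_congr
    (truncatedMoment_eventuallyEq_laplaceIntegral (θ := η) hQP hM hA.measurableSet)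
  have hscale : (fun p : X × ℝ => θ' / θ * (θ * p.2)) = fun p => θ' * p.2 := by
    ext p
    field_simp
  rw [hbridge] at hmom ⊢
  refine (hJ.expGrowthSup_laplaceIntegral_le (continuous_snd.const_mul θ) (hA.prod isClosed_univ)
    ((one_lt_div hθ).2 hθθ') (by rwa [hscale])).trans (EReal.neg_le_neg_iff.2 ?_)
  exact le_iInf₂ fun p hp => iInf₂_le_of_le p.1 hp.1 (iInf_le _ p.2)

theorem tendsto_expRate_truncatedMoment (hQP : ∀ n, Q n ≪ P n) (hM : ∀ n, Measurable (M n))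
    (hJ : SatisfiesLDP (actionLaw P Q M) J) (hθ : 0 < θ) (hθθ' : θ < θ')
    (hmom : expGrowthSup (truncatedMoment P Q M θ' (closure B)) < ⊤)
    (hB : (⨅ m ∈ interior B, ⨅ w : ℝ, (((θ * w : ℝ) : EReal) + J (m, w))) =
      ⨅ m ∈ closure B, ⨅ w : ℝ, (((θ * w : ℝ) : EReal) + J (m, w))) :
    Tendsto (fun n => expRate n (truncatedMoment P Q M θ B n)) atTop
      (𝓝 (-⨅ m ∈ B, ⨅ w : ℝ, (((θ * w : ℝ) : EReal) + J (m, w)))) := by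
  refine tendsto_of_le_liminf_of_limsup_le ?_ ?_
  · rw [liminf_expRate, EReal.neg_le]
    refine le_trans ?_ (hB.trans_le (biInf_mono fun m hm => subset_closure hm))
    refine le_iInf₂ fun m hm => le_iInf fun w => EReal.neg_le.1 ?_
    exact (neg_le_expGrowthInf_truncatedMoment hQP hM hJ isOpen_interior hm w).trans
      (expGrowthInf_monotone (truncatedMoment_mono interior_subset))
  · rw [limsup_expRate]
    refine (expGrowthSup_monotone (truncatedMoment_mono subset_closure)).trans
      ((expGrowthSup_truncatedMoment_le hQP hM hJ hθ hθθ' isClosed_closure hmom).trans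
        (EReal.neg_le_neg_iff.2 ?_))
    exact (biInf_mono fun m hm => interior_subset hm).trans_eq hB

variable [RegularSpace X] {I : X → ℝ≥0∞}

lemma rate_le_add_action_rate (hPQ : ∀ n, P n ≪ Q n) (hQP : ∀ n, Q n ≪ P n)
    (hM : ∀ n, Measurable (M n)) (hI : SatisfiesLDP (fun n => (P n).map (M n)) I)
    (hIlsc : LowerSemicontinuous I) (hJ : SatisfiesLDP (actionLaw P Q M) J) (m : X) (w : ℝ) :
    (I m : EReal) ≤ w + J (m, w) := by
  refine le_of_forall_lt fun a ha => ?_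
  obtain ⟨b, hab, hbI⟩ := exists_between ha
  have hIlsc' : LowerSemicontinuous fun m => (I m : EReal) :=
    continuous_coe_ennreal_ereal.comp_lowerSemicontinuous hIlsc
      EReal.coe_ennreal_strictMono.monotone
  obtain ⟨F, hFm, hF, hFb⟩ := exists_mem_nhds_isClosed_subset (hIlsc' m b hbI)
  refine hab.trans_le (EReal.neg_le_neg_iff.1 ?_)
  calc -((w : EReal) + J (m, w)) ≤ expGrowthInf (truncatedMoment P Q M 1 (interior F)) := by
        simpa using neg_le_expGrowthInf_truncatedMoment (θ := 1) hQP hM hJ isOpen_interior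
          (mem_interior_iff_mem_nhds.2 hFm) w
    _ ≤ expGrowthSup (truncatedMoment P Q M 1 F) :=
        (expGrowthInf_monotone (truncatedMoment_mono interior_subset)).trans
          expGrowthInf_le_expGrowthSup
    _ ≤ -⨅ x ∈ F, (I x : EReal) := by
        rw [truncatedMoment_one hPQ hM hF.measurableSet]
        exact hI.expGrowthSup_measure_le hF
    _ ≤ -b := EReal.neg_le_neg_iff.2 (le_iInf₂ fun x hx => (hFb hx).le)

lemma biInf_add_action_rate_le_rate (hPQ : ∀ n, P n ≪ Q n) (hQP : ∀ n, Q n ≪ P n)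
    (hM : ∀ n, Measurable (M n)) (hI : SatisfiesLDP (fun n => (P n).map (M n)) I)
    (hJ : SatisfiesLDP (actionLaw P Q M) J) (hθ' : 1 < θ')
    (hmom : expGrowthSup (truncatedMoment P Q M θ' B) < ⊤) {m : X} (hm : m ∈ interior B) :
    (⨅ x ∈ B, ⨅ w : ℝ, ((w : EReal) + J (x, w))) ≤ I m := by
  obtain ⟨F, hFm, hF, hFB⟩ := exists_mem_nhds_isClosed_subset (mem_interior_iff_mem_nhds.1 hm)
  refine (biInf_mono hFB).trans (EReal.neg_le_neg_iff.1 ?_)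
  calc -(I m : EReal) ≤ expGrowthInf (truncatedMoment P Q M 1 (interior F)) := by
        rw [truncatedMoment_one hPQ hM isOpen_interior.measurableSet]
        exact hI.neg_rate_le_expGrowthInf_measure isOpen_interior
          (mem_interior_iff_mem_nhds.2 hFm)
    _ ≤ expGrowthSup (truncatedMoment P Q M 1 F) :=
        (expGrowthInf_monotone (truncatedMoment_mono interior_subset)).trans
          expGrowthInf_le_expGrowthSup
    _ ≤ -⨅ x ∈ F, ⨅ w : ℝ, ((w : EReal) + J (x, w)) := by
        have hmomF := (expGrowthSup_monotone (truncatedMoment_mono hFB)).trans_lt hmom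
        simpa using expGrowthSup_truncatedMoment_le hQP hM hJ one_pos hθ' hF hmomF

theorem biInf_closure_rate_eq (hPQ : ∀ n, P n ≪ Q n) (hQP : ∀ n, Q n ≪ P n)
    (hM : ∀ n, Measurable (M n)) (hI : SatisfiesLDP (fun n => (P n).map (M n)) I)
    (hIlsc : LowerSemicontinuous I) (hIB : (⨅ m ∈ interior B, I m) = ⨅ m ∈ closure B, I m)
    (hJ : SatisfiesLDP (actionLaw P Q M) J) (hθ' : 1 < θ')
    (hmom : expGrowthSup (truncatedMoment P Q M θ' B) < ⊤) :
    (⨅ m ∈ closure B, (I m : EReal)) = ⨅ m ∈ B, ⨅ w : ℝ, ((w : EReal) + J (m, w)) := by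
  refine le_antisymm (le_iInf₂ fun m hm => le_iInf fun w => ?_) ?_
  · exact (iInf₂_le m (subset_closure hm)).trans
      (rate_le_add_action_rate hPQ hQP hM hI hIlsc hJ m w)
  · rw [← coe_ennreal_biInf, ← hIB, coe_ennreal_biInf]
    exact le_iInf₂ fun m hm => biInf_add_action_rate_le_rate hPQ hQP hM hI hJ hθ' hmom hm

end TruncatedMoment

theorem efficiency_variational_criterion_general
    {X : Type*} [TopologicalSpace X] [RegularSpace X] [MeasurableSpace X] [OpensMeasurableSpace X]
    {Λ : ℕ → Type*} [∀ n, MeasurableSpace (Λ n)] {P Q : ∀ n, Measure (Λ n)}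
    [∀ n, SigmaFinite (P n)] [∀ n, SigmaFinite (Q n)] (habs : ∀ n, P n ≪ Q n ∧ Q n ≪ P n)
    {M : ∀ n, Λ n → X} (hM : ∀ n, Measurable (M n)) {B : Set X} {I_P : X → ℝ≥0∞}
    (hLDP_M : SatisfiesLDP (fun n => (P n).map (M n)) I_P) (hIPlsc : LowerSemicontinuous I_P)
    (hIPB : (⨅ m ∈ interior B, I_P m) = ⨅ m ∈ closure B, I_P m) {δ : ℝ} (hδ : 0 < δ)
    (hmom : limsup (fun n : ℕ => expRate n
        (∫⁻ x in {x | M n x ∈ closure B},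
          ((P n).rnDeriv (Q n) x) ^ ((2 : ℝ) + δ) ∂(Q n))) atTop < ⊤)
    {J_Q : X × ℝ → ℝ≥0∞}
    (hLDP_Q : SatisfiesLDP (fun n => (Q n).map (fun x => (M n x, action (P n) (Q n) n x))) J_Q)
    (hBgood : (⨅ m ∈ interior B, ⨅ w : ℝ, (((2 * w : ℝ) : EReal) + (J_Q (m, w) : EReal)))
      = ⨅ m ∈ closure B, ⨅ w : ℝ, (((2 * w : ℝ) : EReal) + (J_Q (m, w) : EReal))) :
    Tendsto (fun n : ℕ =>
        -expRate n (∫⁻ x in {x | M n x ∈ B}, ((P n).rnDeriv (Q n) x) ^ 2 ∂(Q n))) atTop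
        (𝓝 (2 * ⨅ m ∈ closure B, (I_P m : EReal)))
      ↔ (⨅ m ∈ B, ⨅ w : ℝ, (((2 * w : ℝ) : EReal) + (J_Q (m, w) : EReal)))
          = 2 * ⨅ m ∈ B, ⨅ w : ℝ, ((w : EReal) + (J_Q (m, w) : EReal)) := by
  have hPQ := fun n => (habs n).1
  have hQP := fun n => (habs n).2
  have hmom_closure : expGrowthSup (truncatedMoment P Q M (2 + δ) (closure B)) < ⊤ :=
    (limsup_expRate _).symm.trans_lt hmom
  have hmom_B := (expGrowthSup_monotone (truncatedMoment_mono subset_closure)).trans_lt hmom_closure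
  have hsecond := (tendsto_expRate_truncatedMoment hQP hM hLDP_Q two_pos
    (lt_add_of_pos_right 2 hδ) hmom_closure hBgood).neg
  simp only [truncatedMoment, ENNReal.rpow_two, neg_neg] at hsecond
  rw [biInf_closure_rate_eq hPQ hQP hM hLDP_M hIPlsc hIPB hLDP_Q (by linarith) hmom_B]
  exact ⟨tendsto_nhds_unique hsecond, fun h => h ▸ hsecond⟩

/-- Under Assumptions 1, 2 and 3, `Q_n` is asymptotically efficient if and only if
`inf_(m ∈ B, w) (2w + J_Q(m,w)) = 2 inf_(m ∈ B, w) (w + J_Q(m,w))`. -/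
theorem efficiency_variational_criterion
    {D : ℕ} {Λ : ℕ → Type*} [∀ n, MeasurableSpace (Λ n)]
    (P Q : ∀ n, Measure (Λ n))
    [∀ n, IsProbabilityMeasure (P n)] [∀ n, IsProbabilityMeasure (Q n)]
    (habs : ∀ n, P n ≪ Q n ∧ Q n ≪ P n)
    (M : ∀ n, Λ n → (Fin D → ℝ)) (hM : ∀ n, Measurable (M n))
    (B : Set (Fin D → ℝ)) (hB : MeasurableSet B)
    (I_P : (Fin D → ℝ) → ℝ≥0∞)
    (hLDP_M : SatisfiesLDP (fun n => (P n).map (M n)) I_P)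
    (hIPgood : IsGoodRate I_P)
    (hIPB : (⨅ m ∈ interior B, I_P m) = ⨅ m ∈ closure B, I_P m)
    (hIPBfin : (⨅ m ∈ closure B, I_P m) ≠ ⊤)
    (δ : ℝ) (hδ : 0 < δ)
    (hmom : limsup (fun n : ℕ => expRate n
        (∫⁻ x in {x | M n x ∈ closure B},
          ((P n).rnDeriv (Q n) x) ^ ((2 : ℝ) + δ) ∂(Q n))) atTop < ⊤)
    (J_P J_Q : (Fin D → ℝ) × ℝ → ℝ≥0∞)
    (hLDP_P : SatisfiesLDP (fun n => (P n).map (fun x => (M n x, action (P n) (Q n) n x))) J_P)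
    (hLDP_Q : SatisfiesLDP (fun n => (Q n).map (fun x => (M n x, action (P n) (Q n) n x))) J_Q)
    (hJPgood : IsGoodRate J_P) (hJQgood : IsGoodRate J_Q)
    (hdom : {p | J_P p ≠ ⊤} = {p | J_Q p ≠ ⊤})
    (hne : {p | J_P p ≠ ⊤}.Nonempty)
    (hBgood : (⨅ m ∈ interior B, ⨅ w : ℝ, (((2 * w : ℝ) : EReal) + (J_Q (m, w) : EReal)))
      = ⨅ m ∈ closure B, ⨅ w : ℝ, (((2 * w : ℝ) : EReal) + (J_Q (m, w) : EReal)))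
    :
    Tendsto (fun n : ℕ => -expRate n (∫⁻ x in {x | M n x ∈ B}, ((P n).rnDeriv (Q n) x) ^ 2 ∂(Q n))) atTop
        (𝓝 (2 * ⨅ m ∈ closure B, (I_P m : EReal)))
      ↔ (⨅ m ∈ B, ⨅ w : ℝ, (((2 * w : ℝ) : EReal) + (J_Q (m, w) : EReal)))
          = 2 * ⨅ m ∈ B, ⨅ w : ℝ, ((w : EReal) + (J_Q (m, w) : EReal)) := by
  exact efficiency_variational_criterion_general habs hM hLDP_M hIPgood.1 hIPB hδ hmom hLDP_Q hBgood
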